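/- arXiv:2102.05154 — 4 statements merged into one kernel-verified Lean document; each statement's English description precedes it below -/
import Mathlib

section
/- Let L be a lattice of dimension 6 in ℝ⁶ with Minkowski-reduced basis (e₁, …, e₆) such that e₁, e₂, e₃, e₄ are minimum vectors of L. Let m = x₁e₁ + ⋯ + x₆e₆ be a minimum vector of L with all coordinates xᵢ ∈ ℤ nonzero, and suppose {e₁, e₂, e₃, e₄, m} is NOT a primitive system in L. Then x₆ is even. -/
/-!
Let `d = gcd(x₅, x₆)`. By Bézout, `{e₁, …, e₄, m}` is primitive when `d = 1`
(`primitive_of_bezout`), so it is enough to exclude `d ≥ 3`.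

The tool is Watson's identity: if `d v = ∑ aᵢ gᵢ` with `sᵢ = sign aᵢ`, then
`∑ |aᵢ| (‖v - sᵢ gᵢ‖² - ‖gᵢ‖²) = (∑ |aᵢ| - 2d) ‖v‖²`.
When the `gᵢ` are minimum vectors and `v` is a lattice vector different from `0` and from all
`sᵢ gᵢ`, the left side is nonnegative, hence `∑ |aᵢ| ≥ 2d` (`watson`).

If `d ∣ x₅` and `d ∣ x₆`, then for `t = 1, 2` there are lattice vectors `v` with
`d v = t m + ∑_{i ≤ 4} bᵢ eᵢ`, where the `bᵢ` may be chosen freely in the class of `-t xᵢ` modulo `d`.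
Choosing least absolute residues `Aᵢ` for `t = 1` and `Bᵢ` for `t = 2` gives
`|Aᵢ| + |Bᵢ| ≤ 3d/4` (`residues`). For `d ≥ 3` Watson's inequality applies to both vectors, and adding
the two instances gives `4d ≤ 3 + ∑ (|Aᵢ| + |Bᵢ|) ≤ 3 + 3d`, so `d = 3`; but then each `|Aᵢ| + |Bᵢ|` is an integer at most
`9/4`, and `12 ≤ 3 + 4 · 2` is false.
-/

/-- Watson's inequality: if `d v` is an integer combination of vectors `g i`, and subtracting
`sign (a i) • g i` from `v ≠ 0` never gives a vector shorter than `g i`, then the coefficients of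
`d v` satisfy `∑ |a i| ≥ 2 d`. -/
lemma watson {E : Type*} [NormedAddCommGroup E] [InnerProductSpace ℝ E] {n : ℕ}
    (g : Fin n → E) (a : Fin n → ℤ) (d : ℤ) (v : E) (hv : v ≠ 0)
    (hdv : (d : ℝ) • v = ∑ i, (a i : ℝ) • g i)
    (h : ∀ i, a i ≠ 0 → ‖g i‖ ≤ ‖v - ((a i).sign : ℝ) • g i‖) :
    2 * d ≤ ∑ i, |a i| := by
  have key : ∀ i, 2 * inner ℝ v ((a i : ℝ) • g i) ≤ (|a i| : ℝ) * ‖v‖ ^ 2 := by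
    intro i
    rcases eq_or_ne (a i) 0 with h0 | h0
    · simp [h0]
    have h1 := h i h0
    have h2 : ‖g i‖ ^ 2 ≤ ‖v - ((a i).sign : ℝ) • g i‖ ^ 2 := by gcongr
    rw [norm_sub_sq_real, inner_smul_right, norm_smul] at h2
    rw [inner_smul_right]
    rcases lt_or_gt_of_ne h0 with hn | hp
    · have hn' : (a i : ℝ) < 0 := by exact_mod_cast hn
      rw [Int.sign_eq_neg_one_of_neg hn] at h2
      rw [abs_of_neg hn']
      norm_num at h2
      nlinarith
    · have hp' : (0 : ℝ) < a i := by exact_mod_cast hp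
      rw [Int.sign_eq_one_of_pos hp] at h2
      rw [abs_of_pos hp']
      norm_num at h2
      nlinarith
  have hs : 2 * ((d : ℝ) * ‖v‖ ^ 2) ≤ (∑ i, (|a i| : ℝ)) * ‖v‖ ^ 2 := by
    have : (d : ℝ) * ‖v‖ ^ 2 = ∑ i, inner ℝ v ((a i : ℝ) • g i) := by
      rw [← inner_sum, ← hdv, inner_smul_right, real_inner_self_eq_norm_sq]
    rw [this, Finset.mul_sum, Finset.sum_mul]
    exact Finset.sum_le_sum fun i _ => key i
  have hpos : 0 < ‖v‖ ^ 2 := by positivity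
  have : (2 * d : ℝ) ≤ ∑ i, (|a i| : ℝ) := by
    rw [← mul_assoc] at hs
    exact le_of_mul_le_mul_right hs hpos
  exact_mod_cast this

/-- Least absolute residues of `-x` and `-2x` modulo `d` have absolute values adding up to at most
`3d/4`. -/
lemma residues (x d : ℤ) (hd : 0 < d) :
    ∃ c A c' B : ℤ, d * c = 1 * x + A ∧ d * c' = 2 * x + B ∧ 4 * (|A| + |B|) ≤ 3 * d := by
  have h1 := Int.emod_nonneg x hd.ne'
  have h2 := Int.emod_lt_of_pos x hd
  have h3 := Int.mul_ediv_add_emod x d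
  set r := x % d
  set q := x / d
  by_cases c1 : 4 * r ≤ d
  · exact ⟨q, -r, 2 * q, -2 * r, by linarith, by linarith, by simp only [abs_eq_max_neg]; omega⟩
  by_cases c2 : 2 * r ≤ d
  · exact ⟨q, -r, 2 * q + 1, d - 2 * r, by linarith, by linarith, by simp only [abs_eq_max_neg]; omega⟩
  by_cases c3 : 4 * r ≤ 3 * d
  · exact ⟨q + 1, d - r, 2 * q + 1, d - 2 * r, by linarith, by linarith, by simp only [abs_eq_max_neg]; omega⟩
  · exact ⟨q + 1, d - r, 2 * q + 2, 2 * d - 2 * r, by linarith, by linarith, by simp only [abs_eq_max_neg]; omega⟩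

lemma coord_eq {E : Type*} [AddCommGroup E] [Module ℝ E] {e : Fin 6 → E}
    (he : LinearIndependent ℝ e) {r s : Fin 6 → ℝ}
    (h : ∑ i, r i • e i = ∑ i, s i • e i) : r = s := by
  have h0 : ∑ i, (r i - s i) • e i = 0 := by
    simp only [sub_smul, Finset.sum_sub_distrib, h, sub_self]
  funext i
  exact sub_eq_zero.mp (Fintype.linearIndependent_iff.mp he (fun i => r i - s i) h0 i)

/-- If the last two coordinates of `m` are coprime, then `e₁, …, e₄, m` is a primitive system. -/
lemma primitive_of_bezout {E : Type*} [AddCommGroup E] [Module ℝ E] {e : Fin 6 → E}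
    (he : LinearIndependent ℝ e) (x : Fin 6 → ℤ) (u w : ℤ) (huw : x 4 * u + x 5 * w = 1)
    (f : Fin 5 → E) (hf : f = ![e 0, e 1, e 2, e 3, ∑ i, (x i : ℝ) • e i]) (c : Fin 6 → ℤ)
    (hc : ∑ i, (c i : ℝ) • e i ∈ Submodule.span ℝ (Set.range f)) :
    ∃ y : Fin 5 → ℤ, ∑ i, (c i : ℝ) • e i = ∑ i, (y i : ℝ) • f i := by
  obtain ⟨y, hy⟩ := (Submodule.mem_span_range_iff_exists_fun ℝ).mp hc
  have hco : (fun i => (c i : ℝ)) =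
      ![y 0 + y 4 * x 0, y 1 + y 4 * x 1, y 2 + y 4 * x 2, y 3 + y 4 * x 3,
        y 4 * x 4, y 4 * x 5] := by
    apply coord_eq he
    rw [← hy, hf]
    simp [Fin.sum_univ_succ]
    module
  have g0 := congrFun hco 0
  have g1 := congrFun hco 1
  have g2 := congrFun hco 2
  have g3 := congrFun hco 3
  have g4 := congrFun hco 4
  have g5 := congrFun hco 5
  simp at g0 g1 g2 g3 g4 g5
  have huw' : (x 4 : ℝ) * u + x 5 * w = 1 := by exact_mod_cast huw
  have hk : y 4 = ((c 4 * u + c 5 * w : ℤ) : ℝ) := by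
    push_cast
    rw [g4, g5]
    linear_combination (- y 4) * huw'
  generalize c 4 * u + c 5 * w = k at hk
  refine ⟨![c 0 - k * x 0, c 1 - k * x 1, c 2 - k * x 2, c 3 - k * x 3, k], ?_⟩
  rw [hf]
  simp [Fin.sum_univ_succ]
  simp only [g4, g5, hk]
  module

/-- Watson's inequality for a lattice vector `v = ∑ cᵢ eᵢ` with `d v = t m + ∑_{i ≤ 4} bᵢ eᵢ`. The bound
`0 < t < d` ensures that `v` is neither `0` nor one of `± e₁, …, ± e₄, ± m`: by `x₆ ≠ 0`, the last
coordinate of `v` is a nonintegral multiple of that of `m`. -/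
lemma watson_step {E : Type*} [NormedAddCommGroup E] [InnerProductSpace ℝ E] {e : Fin 6 → E}
    (he : LinearIndependent ℝ e) (x : Fin 6 → ℤ) (hx5 : x 5 ≠ 0) (l : ℝ)
    (hel : ∀ i : Fin 6, (i : ℕ) < 4 → ‖e i‖ = l) (hml : ‖∑ i, (x i : ℝ) • e i‖ = l)
    (hl : ∀ c : Fin 6 → ℤ, c ≠ 0 → l ≤ ‖∑ i, (c i : ℝ) • e i‖)
    (d t : ℤ) (ht : 0 < t) (htd : t < d) (b c : Fin 6 → ℤ) (hb4 : b 4 = 0) (hb5 : b 5 = 0)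
    (hc : ∀ i, d * c i = t * x i + b i) :
    2 * d ≤ |b 0| + |b 1| + |b 2| + |b 3| + t := by
  have hc5 := hc 5
  rw [hb5, add_zero] at hc5
  have hc50 : c 5 ≠ 0 := by
    intro h
    rw [h, mul_zero] at hc5
    exact mul_ne_zero ht.ne' hx5 hc5.symm
  have hc51 : c 5 ≠ x 5 := by
    intro h
    rw [h] at hc5
    exact htd.ne (mul_right_cancel₀ hx5 hc5).symm
  have hw := watson ![e 0, e 1, e 2, e 3, ∑ i, (x i : ℝ) • e i] ![b 0, b 1, b 2, b 3, t] d
    (∑ i, (c i : ℝ) • e i) ?_ ?_ ?_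
  · simpa [Fin.sum_univ_succ, abs_of_pos ht, add_assoc] using hw
  · intro h
    have := coord_eq he (r := fun i => (c i : ℝ)) (s := 0) (by simpa using h)
    have := congrFun this 5
    simp at this
    exact hc50 this
  · have hr : ∀ i, (d : ℝ) * c i = t * x i + b i := fun i => by exact_mod_cast hc i
    rw [Finset.smul_sum]
    simp only [smul_smul, hr]
    simp [Fin.sum_univ_succ, hb4, hb5]
    module
  · -- subtracting an integer multiple of `e j`, `j ≠ 5`, keeps the last coordinate nonzero
    have aux : ∀ (j : Fin 6) (s : ℤ), j ≠ 5 → (j : ℕ) < 4 →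
        ‖e j‖ ≤ ‖∑ i, (c i : ℝ) • e i - (s : ℝ) • e j‖ := by
      intro j s hj hj4
      rw [hel j hj4]
      have := hl (c - Pi.single j s) (fun h => hc50 (by
        have := congrFun h 5
        simpa [Pi.single_apply, hj.symm] using this))
      convert this using 2
      simp [sub_smul, Finset.sum_sub_distrib, Pi.single_apply, ite_smul]
    intro i _
    fin_cases i
    · exact aux 0 _ (by decide) (by decide)
    · exact aux 1 _ (by decide) (by decide)
    · exact aux 2 _ (by decide) (by decide)
    · exact aux 3 _ (by decide) (by decide)
    · have := hl (c - x) (fun h => hc51 (by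
        have := congrFun h 5
        simp at this
        omega))
      have h2 : ∑ i, ((c - x) i : ℝ) • e i = ∑ i, (c i : ℝ) • e i - ∑ i, (x i : ℝ) • e i := by
        simp [sub_smul, Finset.sum_sub_distrib]
      simp only [Pi.sub_apply, Int.cast_sub] at h2 this
      rw [h2] at this
      simpa [Int.sign_eq_one_of_pos ht, hml] using this

/-- dim 6, Minkowski-reduced basis (e₁,…,e₆) whose first four
vectors are minimum vectors; m a minimum vector with all coordinates nonzero,
{e₁,e₂,e₃,e₄,m} NOT a primitive system.  Then x₆ is even. -/
theorem dim6_nonprimitive_case_even_coord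
    (e : Fin 6 → EuclideanSpace ℝ (Fin 6)) (he : LinearIndependent ℝ e)
    (L : Set (EuclideanSpace ℝ (Fin 6)))
    (hL : L = {v | ∃ c : Fin 6 → ℤ, v = ∑ i, (c i : ℝ) • e i})
    (hred : ∀ (i : Fin 6) (c : Fin 6 → ℤ),
      Finset.gcd (Finset.univ.filter fun j => i ≤ j) c = 1 →
      ‖e i‖ ≤ ‖∑ j, (c j : ℝ) • e j‖)
    (hminvecs : ∀ i : Fin 6, (i : ℕ) < 4 → e i ≠ 0 ∧ ∀ w ∈ L, w ≠ 0 → ‖e i‖ ≤ ‖w‖)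
    (m : EuclideanSpace ℝ (Fin 6)) (hmL : m ∈ L) (hm0 : m ≠ 0)
    (hmin : ∀ w ∈ L, w ≠ 0 → ‖m‖ ≤ ‖w‖)
    (x : Fin 6 → ℤ) (hx : m = ∑ i, (x i : ℝ) • e i)
    (hx0 : ∀ i, x i ≠ 0)
    (f : Fin 5 → EuclideanSpace ℝ (Fin 6))
    (hf : f = ![e 0, e 1, e 2, e 3, m])
    (hnotprim : ¬ ∀ v ∈ L, v ∈ Submodule.span ℝ (Set.range f) →
      ∃ y : Fin 5 → ℤ, v = ∑ i, (y i : ℝ) • f i) :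
    2 ∣ x 5 := by
  have heL : ∀ i, e i ∈ L := by
    intro i
    rw [hL]
    exact ⟨Pi.single i 1, by simp [Pi.single_apply, ite_smul]⟩
  have hel : ∀ i : Fin 6, (i : ℕ) < 4 → ‖e i‖ = ‖m‖ := fun i hi =>
    le_antisymm ((hminvecs i hi).2 m hmL hm0) (hmin _ (heL i) (hminvecs i hi).1)
  have hl : ∀ c : Fin 6 → ℤ, c ≠ 0 → ‖m‖ ≤ ‖∑ i, (c i : ℝ) • e i‖ := by
    intro c hc
    apply hmin
    · rw [hL]; exact ⟨c, rfl⟩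
    · intro h
      have := coord_eq he (r := fun i => (c i : ℝ)) (s := 0) (by simpa using h)
      apply hc
      funext i
      have := congrFun this i
      simpa using this
  have hml : ‖∑ i, (x i : ℝ) • e i‖ = ‖m‖ := by rw [← hx]
  obtain ⟨c4, h4⟩ := Int.gcd_dvd_left (x 4) (x 5)
  obtain ⟨c5, h5⟩ := Int.gcd_dvd_right (x 4) (x 5)
  have hbez := Int.gcd_eq_gcd_ab (x 4) (x 5)
  have hd0 : 0 < Int.gcd (x 4) (x 5) := Int.gcd_pos_of_ne_zero_left _ (hx0 4)
  set d := Int.gcd (x 4) (x 5) with hd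
  have hd1 : d ≠ 1 := by
    intro h1
    apply hnotprim
    intro v hv hvs
    rw [hL] at hv
    obtain ⟨c, rfl⟩ := hv
    rw [h1] at hbez
    exact primitive_of_bezout he x _ _ (by exact_mod_cast hbez.symm) f (by rw [hf, hx]) c hvs
  rcases (show d = 2 ∨ 3 ≤ d by omega) with h2 | h3
  · exact ⟨c5, by rw [h2] at h5; exact_mod_cast h5⟩
  exfalso
  have hdz : (3 : ℤ) ≤ d := by exact_mod_cast h3
  obtain ⟨p0, A0, q0, B0, hA0, hB0, hAB0⟩ := residues (x 0) d (by omega)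
  obtain ⟨p1, A1, q1, B1, hA1, hB1, hAB1⟩ := residues (x 1) d (by omega)
  obtain ⟨p2, A2, q2, B2, hA2, hB2, hAB2⟩ := residues (x 2) d (by omega)
  obtain ⟨p3, A3, q3, B3, hA3, hB3, hAB3⟩ := residues (x 3) d (by omega)
  have w1 := watson_step he x (hx0 5) ‖m‖ hel hml hl d 1 (by omega) (by omega)
    ![A0, A1, A2, A3, 0, 0] ![p0, p1, p2, p3, c4, c5] rfl rfl (by
      intro i
      fin_cases i
      · exact hA0
      · exact hA1
      · exact hA2
      · exact hA3
      · change (d : ℤ) * c4 = 1 * x 4 + 0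
        linarith
      · change (d : ℤ) * c5 = 1 * x 5 + 0
        linarith)
  have w2 := watson_step he x (hx0 5) ‖m‖ hel hml hl d 2 (by omega) (by omega)
    ![B0, B1, B2, B3, 0, 0] ![q0, q1, q2, q3, 2 * c4, 2 * c5] rfl rfl (by
      intro i
      fin_cases i
      · exact hB0
      · exact hB1
      · exact hB2
      · exact hB3
      · change (d : ℤ) * (2 * c4) = 2 * x 4 + 0
        linarith
      · change (d : ℤ) * (2 * c5) = 2 * x 5 + 0
        linarith)
  change 2 * (d : ℤ) ≤ |A0| + |A1| + |A2| + |A3| + 1 at w1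
  change 2 * (d : ℤ) ≤ |B0| + |B1| + |B2| + |B3| + 2 at w2
  -- The sum of `w1` and `w2` gives `d ≤ 3`; for `d = 3` integrality sharpens `3d/4` to `2`.
  have hdle : (d : ℤ) ≤ 3 := by linarith
  have hd3 : (d : ℤ) = 3 := le_antisymm hdle hdz
  generalize (d : ℤ) = D at *
  subst hd3
  generalize |A0| = a0 at *
  generalize |A1| = a1 at *
  generalize |A2| = a2 at *
  generalize |A3| = a3 at *
  omega
end

section
/- Let L be a lattice of dimension n in ℝⁿ with n ≤ 6, and let (e₁, …, eₙ) be a basis of L all of whose vectors are minimum vectors of L. Let m = x₁e₁ + ⋯ + xₙeₙ be a minimum vector of L with x ∈ ℤⁿ. Then |xᵢ| ≤ 1 for all i if n ≤ 3, |xᵢ| ≤ 2 for all i if n ∈ {4, 5}, and |xᵢ| ≤ 3 for all i if n = 6. -/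
/-!
If `x i ≠ 0`, exchanging `e i` for `m` gives minimum vectors `f j` spanning a sublattice `L'` of `L`
of index `d = |x i|`, and `L / L'` is cyclic, generated by `e i = (∑ a j • f j) / d`. So whenever
`d ∤ k` and `b ≡ k a (mod d)`, the vector `(∑ b j • f j) / d` is a nonzero element of `L`, and hence
`‖∑ b j • f j‖² ≥ d² μ`, where `μ` is the squared minimum (`lattice_lower_bound`).

*Watson's inequality* (`watson`). With `V = ∑ b j • f j`, the identity
`∑ |b j| (‖V - d sgn(b j) f j‖² - d² ‖f j‖²) = (∑ |b j| - 2 d) ‖V‖²` has a nonnegative left-hand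
side, so `∑ |b j| ≥ 2 d`. This applies to the representatives of `k a` of least absolute value.
Averaging over `k` (each coordinate contributes at most `d² / 4` in total, `sum_distZ_le`) gives
`2 d (d - 1) ≤ n d² / 4`, i.e. `8 (d - 1) ≤ n d`. For `n ≤ 3`, `n ∈ {4, 5}`, `n = 6` this yields
`d ≤ 1`, `d ≤ 2`, `d ≤ 4`.

*The case `n = 6`, `d = 4`* (`not_index_four`). Watson's inequality for `k = 1, 2` forces exactly
four `a j` to be odd and the other two to be `2 (mod 4)`. The vectors `(± f₁ ± f₂ ± f₃ ± f₄) / 2`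
all lie in `L` and have average squared norm `μ`, so each has squared norm `μ`. Then the vectors
`(± f₁ ± f₂ ± f₃ ± f₄) / 4 ± f₅ / 2 ± f₆ / 2`, where the first four signs are prescribed and the last
two are free, have average squared norm `3 μ / 4 < μ`, a contradiction.
-/

/-! ### Averaging distances to multiples of `d` -/

/-- The distance from `t` to the nearest multiple of `d`. -/
def distZ (d t : ℕ) : ℕ := min (t % d) (d - t % d)

lemma four_mul_sum_min_le (d : ℕ) : 4 * ∑ k ∈ Finset.range d, min k (d - k) ≤ d ^ 2 := by
  induction d using Nat.twoStepInduction with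
  | zero => simp
  | one => simp
  | more d ih _ =>
    have h : ∑ k ∈ Finset.range (d + 2), min k (d + 2 - k)
        = ∑ k ∈ Finset.range d, min k (d - k) + (d + 1) := by
      rw [Finset.sum_range_succ']
      have : ∀ k ∈ Finset.range (d + 1), min (k + 1) (d + 2 - (k + 1)) = min k (d - k) + 1 := by
        intro k hk
        rw [Finset.mem_range] at hk
        omega
      rw [Finset.sum_congr rfl this, Finset.sum_add_distrib, Finset.sum_range_succ]
      simp
    rw [h]
    nlinarith

lemma sum_distZ_coprime (d a : ℕ) (h : Nat.Coprime a d) :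
    ∑ k ∈ Finset.range d, distZ d (k * a) = ∑ k ∈ Finset.range d, min k (d - k) := by
  have hinj : Set.InjOn (fun k => k * a % d) (Finset.range d : Set ℕ) := by
    intro k hk l hl hkl
    have hkl' : k * a ≡ l * a [MOD d] := hkl
    have := Nat.ModEq.cancel_right_of_coprime (by rw [Nat.gcd_comm]; exact h) hkl'
    simp only [Finset.coe_range, Set.mem_Iio] at hk hl
    exact Nat.ModEq.eq_of_lt_of_lt this hk hl
  have himg : (Finset.range d).image (fun k => k * a % d) = Finset.range d := by
    apply Finset.eq_of_subset_of_card_le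
    · intro y hy
      simp only [Finset.mem_image, Finset.mem_range] at hy ⊢
      obtain ⟨k, hk, rfl⟩ := hy
      exact Nat.mod_lt _ (by omega)
    · rw [Finset.card_image_of_injOn hinj]
  conv_rhs => rw [← himg]
  rw [Finset.sum_image hinj]
  rfl

lemma sum_range_mul_periodic (F : ℕ → ℕ) (d : ℕ) (hF : ∀ k, F (k + d) = F k) (g : ℕ) :
    ∑ k ∈ Finset.range (g * d), F k = g * ∑ k ∈ Finset.range d, F k := by
  have hF' : ∀ g k, F (g * d + k) = F k := by
    intro g
    induction g with
    | zero => simp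
    | succ g ih => intro k; rw [← ih k, ← hF (g * d + k)]; congr 1; ring
  induction g with
  | zero => simp
  | succ g ih =>
    rw [add_mul, one_mul, Finset.sum_range_add, ih, add_mul, one_mul]
    simp [hF']

/-- The multiples `k * a` are at average distance at most `d / 4` from `d ℤ`; writing `d = g d'`,
`a = g a'` with `g = gcd a d`, this reduces to the permutation `k ↦ k a'` of the residues
modulo `d'`. -/
lemma sum_distZ_le (d a : ℕ) (hd : 0 < d) :
    4 * ∑ k ∈ Finset.range d, distZ d (k * a) ≤ d ^ 2 := by
  obtain ⟨g, a', d', hg, hcop, ha, hd'⟩ := Nat.exists_coprime' (Nat.gcd_pos_of_pos_right a hd)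
  subst ha hd'
  have h1 : ∀ k, distZ (d' * g) (k * (a' * g)) = g * distZ d' (k * a') := by
    intro k
    unfold distZ
    rw [show k * (a' * g) = g * (k * a') by ring, show d' * g = g * d' by ring,
      Nat.mul_mod_mul_left, ← Nat.mul_sub, Nat.mul_min_mul_left]
  simp only [h1]
  rw [← Finset.mul_sum, mul_comm d' g, sum_range_mul_periodic _ d' (fun k => by
    simp [distZ, add_mul]), sum_distZ_coprime d' a' hcop]
  have := four_mul_sum_min_le d'
  calc _ = g ^ 2 * (4 * ∑ k ∈ Finset.range d', min k (d' - k)) := by ring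
    _ ≤ g ^ 2 * d' ^ 2 := by gcongr
    _ = _ := by ring

/-- Some representative of the class of `t` modulo `d` has absolute value `distZ d t`. -/
lemma exists_rep (d t : ℕ) (hd : 0 < d) : ∃ b : ℤ, (d : ℤ) ∣ b - t ∧ |b| = distZ d t := by
  have hlt := Nat.mod_lt t hd
  have hdm := Nat.div_add_mod t d
  unfold distZ
  rcases le_total (t % d) (d - t % d) with h | h
  · refine ⟨(t % d : ℕ), ⟨-(t / d : ℕ), ?_⟩, ?_⟩
    · zify at hdm; push_cast; linarith
    · rw [min_eq_left h, abs_of_nonneg (by positivity)]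
  · refine ⟨(t % d : ℕ) - d, ⟨-(t / d : ℕ) - 1, ?_⟩, ?_⟩
    · zify at hdm; push_cast; linarith
    · rw [min_eq_right h, abs_of_nonpos (by push_cast; omega)]
      push_cast [hlt.le]
      ring

/-! ### Watson's inequality and the index bound -/

section Index

variable {E : Type*} [NormedAddCommGroup E] [InnerProductSpace ℝ E]

/-- `f` consists of vectors of squared norm `μ`, and every vector `(∑ b j • f j) / d` with
`b ≡ k a (mod d)`, `d ∤ k`, has squared norm at least `μ`. -/
structure IsCyclicMinSystem {n : ℕ} (d : ℕ) (a : Fin n → ℤ) (f : Fin n → E) (μ : ℝ) : Prop where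
  pos : 0 < μ
  norm_sq : ∀ j, ‖f j‖ ^ 2 = μ
  le : ∀ (k : ℤ) (b : Fin n → ℤ), ¬ (d : ℤ) ∣ k → (∀ j, (d : ℤ) ∣ b j - k * a j) →
    (d : ℝ) ^ 2 * μ ≤ ‖∑ j, (b j : ℝ) • f j‖ ^ 2

variable {n d : ℕ} {a : Fin n → ℤ} {f : Fin n → E} {μ : ℝ}

lemma IsCyclicMinSystem.watson (h : IsCyclicMinSystem d a f μ) (hd : 0 < d) {k : ℤ}
    {b : Fin n → ℤ} (hk : ¬ (d : ℤ) ∣ k) (hb : ∀ j, (d : ℤ) ∣ b j - k * a j) :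
    2 * (d : ℤ) ≤ ∑ j, |b j| := by
  set V := ∑ j, (b j : ℝ) • f j with hV
  have hVpos : 0 < ‖V‖ ^ 2 := by
    have := h.le k b hk hb
    have := h.pos
    have : 0 < (d : ℝ) ^ 2 * μ := by positivity
    linarith
  -- Lattice vectors `V - d s f j` arise from `b` by shifting one coordinate by a multiple of `d`.
  have hterm : ∀ (j : Fin n) (s : ℤ), s ^ 2 = 1 → 2 * (d : ℝ) * (s * inner ℝ V (f j)) ≤ ‖V‖ ^ 2 := by
    intro j s hs
    have hle := h.le k (fun l => b l - if l = j then d * s else 0) hk (fun l => by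
      have := hb l
      split_ifs
      · have : b l - d * s - k * a l = (b l - k * a l) - d * s := by ring
        rw [this]
        exact dvd_sub (hb l) (dvd_mul_right _ _)
      · simpa using this)
    have heq : ∑ l, ((b l - if l = j then d * s else 0 : ℤ) : ℝ) • f l
        = V - ((d : ℝ) * s) • f j := by
      push_cast
      simp only [sub_smul, Finset.sum_sub_distrib, ite_smul, zero_smul, Finset.sum_ite_eq',
        Finset.mem_univ, if_true, ← hV]
    rw [heq, norm_sub_sq_real, inner_smul_right, norm_smul, mul_pow, h.norm_sq, Real.norm_eq_abs,
      sq_abs, mul_pow] at hle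
    have hs' : (s : ℝ) ^ 2 = 1 := by exact_mod_cast hs
    rw [hs'] at hle
    linarith
  have hsum : 2 * (d : ℝ) * ‖V‖ ^ 2 ≤ (∑ j, |(b j : ℝ)|) * ‖V‖ ^ 2 := by
    have hVV : ‖V‖ ^ 2 = ∑ j, (b j : ℝ) * inner ℝ V (f j) := by
      rw [← real_inner_self_eq_norm_sq]
      conv_lhs => rw [hV, inner_sum]
      simp only [inner_smul_right, ← hV]
    conv_lhs => rw [hVV]
    rw [Finset.mul_sum, Finset.sum_mul]
    refine Finset.sum_le_sum fun j _ => ?_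
    rcases le_total 0 (b j) with hbj | hbj
    · have hr : (0 : ℝ) ≤ b j := by exact_mod_cast hbj
      have := hterm j 1 (by norm_num)
      rw [abs_of_nonneg hr]
      push_cast at this
      nlinarith
    · have hr : (b j : ℝ) ≤ 0 := by exact_mod_cast hbj
      have := hterm j (-1) (by norm_num)
      rw [abs_of_nonpos hr]
      push_cast at this
      nlinarith
  have := le_of_mul_le_mul_right hsum hVpos
  exact_mod_cast this

lemma IsCyclicMinSystem.index_bound (h : IsCyclicMinSystem d a f μ) (hd : 0 < d) :
    8 * (d - 1) ≤ n * d := by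
  have hdZ : (d : ℤ) ≠ 0 := by positivity
  -- natural representatives of the `a j`
  set A : Fin n → ℕ := fun j => (a j % d).toNat with hA
  have hA' : ∀ j, (d : ℤ) ∣ (A j : ℤ) - a j := by
    intro j
    rw [hA]
    simp only
    rw [Int.toNat_of_nonneg (Int.emod_nonneg _ hdZ)]
    exact (Int.mod_modEq (a j) d).symm.dvd
  have hk : ∀ k ∈ Finset.Ico 1 d, 2 * d ≤ ∑ j, distZ d (k * A j) := by
    intro k hk
    rw [Finset.mem_Ico] at hk
    choose b hb hb' using fun j => exists_rep d (k * A j) hd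
    have hw := h.watson hd (k := k) (b := b) (by
      intro hdvd
      have := Nat.le_of_dvd (by omega) (Int.natCast_dvd_natCast.mp hdvd)
      omega) (fun j => by
      have : b j - k * a j = (b j - (k * A j : ℕ)) + k * (A j - a j) := by push_cast; ring
      rw [this]
      exact dvd_add (hb j) (dvd_mul_of_dvd_right (hA' j) _))
    simp only [hb'] at hw
    exact_mod_cast hw
  have h1 : (d - 1) * (2 * d) ≤ ∑ k ∈ Finset.Ico 1 d, ∑ j, distZ d (k * A j) := by
    have := Finset.card_nsmul_le_sum _ _ _ hk
    simpa using this
  have h2 : ∑ k ∈ Finset.Ico 1 d, ∑ j, distZ d (k * A j)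
      ≤ ∑ k ∈ Finset.range d, ∑ j, distZ d (k * A j) := by
    apply Finset.sum_le_sum_of_subset
    intro k
    simp
  rw [Finset.sum_comm (s := Finset.range d)] at h2
  have h3 : 4 * ∑ j, ∑ k ∈ Finset.range d, distZ d (k * A j) ≤ n * d ^ 2 := by
    rw [Finset.mul_sum]
    calc _ ≤ ∑ _j : Fin n, d ^ 2 := Finset.sum_le_sum fun j _ => sum_distZ_le d (A j) hd
      _ = _ := by simp
  refine Nat.le_of_mul_le_mul_right (?_ : _ * d ≤ _ * d) hd
  nlinarith

/-! ### Exclusion of index four in dimension six -/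

lemma exists_signs_le {ι : Type*} [DecidableEq ι] (g : ι → E) (S : Finset ι) (u : E) :
    ∃ s : ι → ℤ, (∀ j, s j = 1 ∨ s j = -1) ∧
      ‖u + ∑ j ∈ S, (s j : ℝ) • g j‖ ^ 2 ≤ ‖u‖ ^ 2 + ∑ j ∈ S, ‖g j‖ ^ 2 := by
  induction S using Finset.induction_on generalizing u with
  | empty => exact ⟨fun _ => 1, by simp, by simp⟩
  | insert i S hi ih =>
    obtain ⟨t, ht, hle⟩ : ∃ t : ℤ, (t = 1 ∨ t = -1) ∧
        ‖u + (t : ℝ) • g i‖ ^ 2 ≤ ‖u‖ ^ 2 + ‖g i‖ ^ 2 := by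
      rcases le_total (inner ℝ u (g i)) 0 with h | h
      · refine ⟨1, by simp, ?_⟩
        push_cast
        rw [one_smul, norm_add_sq_real]
        linarith
      · refine ⟨-1, by simp, ?_⟩
        push_cast
        rw [neg_one_smul, ← sub_eq_add_neg, norm_sub_sq_real]
        linarith
    obtain ⟨s, hs, hs'⟩ := ih (u + (t : ℝ) • g i)
    refine ⟨Function.update s i t, fun j => ?_, ?_⟩
    · by_cases hj : j = i
      · subst hj; simpa using ht
      · simpa [hj] using hs j
    · rw [Finset.sum_insert hi, Finset.sum_insert hi, Function.update_self]
      have : ∑ j ∈ S, ((Function.update s i t j : ℤ) : ℝ) • g j = ∑ j ∈ S, (s j : ℝ) • g j :=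
        Finset.sum_congr rfl fun j hj => by
          rw [Function.update_of_ne (ne_of_mem_of_not_mem hj hi)]
      rw [this, ← add_assoc]
      linarith

/-- The average of `‖u + ∑ ± g j‖²` over all signs is `‖u‖² + ∑ ‖g j‖²`, so a value above it
forces one below it. -/
lemma exists_signs_lt {ι : Type*} [DecidableEq ι] (g : ι → E) (S : Finset ι) (u : E)
    (hgt : ‖u‖ ^ 2 + ∑ j ∈ S, ‖g j‖ ^ 2 < ‖u + ∑ j ∈ S, g j‖ ^ 2) :
    ∃ s : ι → ℤ, (∀ j, s j = 1 ∨ s j = -1) ∧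
      ‖u + ∑ j ∈ S, (s j : ℝ) • g j‖ ^ 2 < ‖u‖ ^ 2 + ∑ j ∈ S, ‖g j‖ ^ 2 := by
  induction S using Finset.induction_on generalizing u with
  | empty => simp at hgt
  | insert i S hi ih =>
    rw [Finset.sum_insert hi, Finset.sum_insert hi] at hgt
    obtain ⟨t, ht, s, hs, hlt⟩ : ∃ t : ℤ, (t = 1 ∨ t = -1) ∧ ∃ s : ι → ℤ,
        (∀ j, s j = 1 ∨ s j = -1) ∧ ‖u + (t : ℝ) • g i + ∑ j ∈ S, (s j : ℝ) • g j‖ ^ 2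
          < ‖u‖ ^ 2 + (‖g i‖ ^ 2 + ∑ j ∈ S, ‖g j‖ ^ 2) := by
      have e1 := norm_add_sq_real u (g i)
      have e2 := norm_sub_sq_real u (g i)
      rcases lt_trichotomy (inner ℝ u (g i)) 0 with h | h | h
      · obtain ⟨s, hs, hle⟩ := exists_signs_le g S (u + g i)
        refine ⟨1, by simp, s, hs, ?_⟩
        push_cast
        rw [one_smul]
        linarith
      · obtain ⟨s, hs, hle⟩ := ih (u + g i) (by rw [add_assoc u]; linarith)
        refine ⟨1, by simp, s, hs, ?_⟩
        push_cast
        rw [one_smul]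
        linarith
      · obtain ⟨s, hs, hle⟩ := exists_signs_le g S (u - g i)
        refine ⟨-1, by simp, s, hs, ?_⟩
        push_cast
        rw [neg_one_smul, ← sub_eq_add_neg]
        linarith
    refine ⟨Function.update s i t, fun j => ?_, ?_⟩
    · by_cases hj : j = i
      · subst hj; simpa using ht
      · simpa [hj] using hs j
    · rw [Finset.sum_insert hi, Finset.sum_insert hi, Function.update_self]
      have : ∑ j ∈ S, ((Function.update s i t j : ℤ) : ℝ) • g j = ∑ j ∈ S, (s j : ℝ) • g j :=
        Finset.sum_congr rfl fun j hj => by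
          rw [Function.update_of_ne (ne_of_mem_of_not_mem hj hi)]
      rw [this, ← add_assoc]
      exact hlt

lemma not_index_four {a : Fin 6 → ℤ} {f : Fin 6 → E} (h : IsCyclicMinSystem 4 a f μ) : False := by
  have hμ := h.pos
  have hrep : ∀ z : ℤ, ∃ b : ℤ, (4 : ℤ) ∣ b - z ∧ (b = 0 ∨ b = 1 ∨ b = -1 ∨ b = 2) := by
    intro z
    have : z % 4 = 0 ∨ z % 4 = 1 ∨ z % 4 = 2 ∨ z % 4 = 3 := by omega
    rcases this with h | h | h | h
    · exact ⟨0, by omega, by simp⟩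
    · exact ⟨1, by omega, by simp⟩
    · exact ⟨2, by omega, by simp⟩
    · exact ⟨-1, by omega, by simp⟩
  choose b hb hb' using fun j => hrep (a j)
  set O : Finset (Fin 6) := Finset.univ.filter (fun j => b j = 1 ∨ b j = -1) with hO
  set T : Finset (Fin 6) := Finset.univ.filter (fun j => b j = 2) with hT
  have hOT : Disjoint O T := by
    rw [Finset.disjoint_filter]
    intro j _ h1 h2
    omega
  -- Watson's inequality for `k = 1` and for `k = 2`
  have w1 : 8 ≤ O.card + 2 * T.card := by
    have hw := h.watson (by norm_num) (k := 1) (b := b) (by norm_num) (by simpa using hb)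
    have : ∑ j, |b j| = ∑ j, ((if (b j = 1 ∨ b j = -1) then 1 else 0)
        + 2 * (if b j = 2 then 1 else 0)) :=
      Finset.sum_congr rfl fun j _ => by
        rcases hb' j with h | h | h | h <;> simp [h]
    rw [this, Finset.sum_add_distrib, ← Finset.mul_sum, Finset.sum_boole, Finset.sum_boole] at hw
    push_cast at hw
    zify
    linarith
  have w2 : 4 ≤ O.card := by
    have hw := h.watson (by norm_num) (k := 2)
      (b := fun j => 2 * (if (b j = 1 ∨ b j = -1) then 1 else 0)) (by norm_num) (fun j => by
        have := hb j
        push_cast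
        rcases hb' j with h | h | h | h <;> simp [h] at this ⊢ <;> omega)
    have : ∑ j, |2 * (if (b j = 1 ∨ b j = -1) then (1 : ℤ) else 0)|
        = ∑ j, 2 * (if (b j = 1 ∨ b j = -1) then 1 else 0) :=
      Finset.sum_congr rfl fun j _ => abs_of_nonneg (by split_ifs <;> norm_num)
    rw [this, ← Finset.mul_sum, Finset.sum_boole] at hw
    push_cast at hw
    zify
    linarith
  have w3 : O.card + T.card ≤ 6 := by
    rw [← Finset.card_union_of_disjoint hOT]
    exact (Finset.card_le_univ _).trans (by simp)
  have hOc : O.card = 4 := by omega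
  have hTc : T.card = 2 := by omega
  set g : Fin 6 → E := fun j => (b j : ℝ) • f j with hg
  have hgO : ∑ j ∈ O, ‖g j‖ ^ 2 = 4 * μ := by
    have : ∀ j ∈ O, ‖g j‖ ^ 2 = μ := by
      intro j hj
      rw [hO, Finset.mem_filter] at hj
      rw [hg]
      simp only [norm_smul, mul_pow, h.norm_sq]
      rcases hj.2 with e | e <;> simp [e]
    rw [Finset.sum_congr rfl this]
    simp [hOc]
  have hgT : ∑ j ∈ T, ‖g j‖ ^ 2 = 8 * μ := by
    have : ∀ j ∈ T, ‖g j‖ ^ 2 = 4 * μ := by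
      intro j hj
      rw [hT, Finset.mem_filter] at hj
      rw [hg]
      simp only [norm_smul, mul_pow, h.norm_sq]
      simp [hj.2]
      norm_num
    rw [Finset.sum_congr rfl this]
    simp [hTc]
    ring
  have hu : ‖∑ j ∈ O, g j‖ ^ 2 ≤ 4 * μ := by
    by_contra! hlt
    obtain ⟨s, hs, hs'⟩ := exists_signs_lt g O 0 (by simpa [hgO] using hlt)
    -- `∑ j ∈ O, s j • g j` is half of a vector to which `h.le` applies with `k = 2`
    have hle := h.le 2 (fun j => if j ∈ O then 2 * s j * b j else 0) (by norm_num) (fun j => by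
      have h1 := hb j
      have h2 := hs j
      simp only [hO, Finset.mem_filter, Finset.mem_univ, true_and]
      push_cast
      rcases hb' j with h | h | h | h <;> rcases h2 with h2 | h2 <;>
        simp [h, h2] at h1 ⊢ <;> omega)
    have heq : ∑ j, ((if j ∈ O then 2 * s j * b j else 0 : ℤ) : ℝ) • f j
        = (2 : ℝ) • ∑ j ∈ O, (s j : ℝ) • g j := by
      rw [Finset.smul_sum, hO, Finset.sum_filter]
      refine Finset.sum_congr rfl fun j _ => ?_
      simp only [Finset.mem_filter, Finset.mem_univ, true_and]
      split_ifs
      · simp [hg, smul_smul, mul_assoc]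
      · simp
    rw [heq, norm_smul, mul_pow] at hle
    rw [zero_add, hgO] at hs'
    norm_num at hle hs'
    linarith
  obtain ⟨s, hs, hs'⟩ := exists_signs_le g T (∑ j ∈ O, g j)
  have hle := h.le 1 (fun j => if j ∈ T then s j * b j else b j) (by norm_num) (fun j => by
    have h1 := hb j
    have h2 := hs j
    simp only [hT, Finset.mem_filter, Finset.mem_univ, true_and]
    push_cast
    rcases hb' j with h | h | h | h <;> rcases h2 with h2 | h2 <;>
      simp [h, h2] at h1 ⊢ <;> omega)
  have heq : ∑ j, ((if j ∈ T then s j * b j else b j : ℤ) : ℝ) • f j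
      = ∑ j ∈ O, g j + ∑ j ∈ T, (s j : ℝ) • g j := by
    rw [hO, hT, Finset.sum_filter, Finset.sum_filter, ← Finset.sum_add_distrib]
    refine Finset.sum_congr rfl fun j _ => ?_
    rcases hb' j with h | h | h | h <;> simp [h, hg, smul_smul]
  rw [heq] at hle
  rw [hgT] at hs'
  norm_num at hle
  linarith

end Index

/-! ### Exchanging a basis vector for `m` -/

/-- Replacing `e i` by the minimum vector `m = ∑ x j • e j` gives a system of minimum vectors of
cyclic index `|x i|`. -/
lemma lattice_lower_bound {E : Type*} [NormedAddCommGroup E] [InnerProductSpace ℝ E] {n : ℕ}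
    (e : Fin n → E) {μ : ℝ} (hμ : 0 < μ) (he : ∀ j, ‖e j‖ ^ 2 = μ)
    (hmin : ∀ c : Fin n → ℤ, c ≠ 0 → μ ≤ ‖∑ j, (c j : ℝ) • e j‖ ^ 2)
    (x : Fin n → ℤ) (hx : ‖∑ j, (x j : ℝ) • e j‖ ^ 2 = μ) (i : Fin n) :
    IsCyclicMinSystem (x i).natAbs
      (fun j => if j = i then (x i).sign else -((x i).sign * x j))
      (Function.update e i (∑ j, (x j : ℝ) • e j)) μ := by
  refine ⟨hμ, fun j => ?_, fun k b hk hb => ?_⟩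
  · by_cases hj : j = i
    · subst hj; simpa using hx
    · simpa [hj] using he j
  · set d := (x i).natAbs with hd
    set σ := (x i).sign with hσ
    have hxd : x i = σ * d := by rw [hσ, hd, Int.sign_mul_natAbs]
    rcases eq_or_ne (x i) 0 with h0 | h0
    · simp [hd, h0]
    have hσσ : σ * σ = 1 := by
      rcases lt_or_gt_of_ne h0 with h | h
      · rw [hσ, Int.sign_eq_neg_one_of_neg h]; norm_num
      · rw [hσ, Int.sign_eq_one_of_pos h]; norm_num
    -- coordinates in the basis `e` of the vector in question, divided by `d`
    have hw : ∀ j, ∃ w : ℤ, b j + b i * x j - (if j = i then b i else 0) = d * w ∧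
        (j = i → w = σ * b i) := by
      intro j
      by_cases hj : j = i
      · subst hj
        refine ⟨σ * b j, ?_, fun _ => rfl⟩
        simp only [if_true]
        rw [hxd]
        ring
      · have h1 := hb j
        have h2 := hb i
        simp only [hj, if_false, if_true] at h1 h2 ⊢
        have h3 : (d : ℤ) ∣ b j + b i * x j - 0 := by
          have : b j + b i * x j - 0 = (b j - k * -(σ * x j)) + x j * (b i - k * σ) := by ring
          rw [this]
          exact dvd_add h1 (dvd_mul_of_dvd_right h2 _)
        obtain ⟨w, hw⟩ := h3
        exact ⟨w, hw, fun h => h.elim⟩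
    choose w hw hwi using hw
    have hw0 : w ≠ 0 := by
      intro hw0
      have h1 : σ * b i = 0 := by rw [← hwi i rfl, hw0]; rfl
      have h2 := hb i
      simp only [if_true] at h2
      apply hk
      have : k = -(σ * (b i - k * σ)) := by linear_combination h1 - k * hσσ
      rw [this]
      exact (dvd_mul_of_dvd_right h2 _).neg_right
    have heq : ∑ j, (b j : ℝ) • Function.update e i (∑ j, (x j : ℝ) • e j) j
        = (d : ℝ) • ∑ j, (w j : ℝ) • e j := by
      have h1 : ∀ j, (b j : ℝ) • Function.update e i (∑ j, (x j : ℝ) • e j) j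
          = (b j : ℝ) • e j + if j = i then (b i : ℝ) • (∑ j, (x j : ℝ) • e j - e i) else 0 := by
        intro j
        by_cases hj : j = i
        · subst hj; simp [smul_sub]
        · simp [hj]
      have h2 : ∀ j, (d : ℝ) • (w j : ℝ) • e j = (b j : ℝ) • e j + (b i : ℝ) • (x j : ℝ) • e j
          - if j = i then (b i : ℝ) • e i else 0 := by
        intro j
        have h3 : (d : ℝ) * w j = b j + b i * x j - (if j = i then b i else 0 : ℤ) := by
          exact_mod_cast (hw j).symm
        rw [smul_smul, h3]
        by_cases hj : j = i
        · subst hj; simp [mul_smul]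
        · simp [hj, add_smul, mul_smul]
      rw [Finset.smul_sum, Finset.sum_congr rfl (fun j _ => h1 j),
        Finset.sum_congr rfl (fun j _ => h2 j), Finset.sum_sub_distrib, Finset.sum_add_distrib,
        Finset.sum_add_distrib, ← Finset.smul_sum]
      simp [smul_sub, add_sub_assoc]
    rw [heq, norm_smul, mul_pow, Real.norm_eq_abs, sq_abs]
    exact mul_le_mul_of_nonneg_left (hmin w hw0) (by positivity)

/-- n ≤ 6, basis consisting of minimum vectors; then the
coordinates of any minimum vector are bounded by 1 (n ≤ 3), 2 (n = 4, 5)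
and 3 (n = 6). -/
theorem minvec_coords_bound_min_basis
    (n : ℕ) (hn1 : 1 ≤ n) (hn : n ≤ 6)
    (e : Fin n → EuclideanSpace ℝ (Fin n)) (he : LinearIndependent ℝ e)
    (L : Set (EuclideanSpace ℝ (Fin n)))
    (hL : L = {v | ∃ c : Fin n → ℤ, v = ∑ i, (c i : ℝ) • e i})
    (hminvecs : ∀ i : Fin n, e i ≠ 0 ∧ ∀ w ∈ L, w ≠ 0 → ‖e i‖ ≤ ‖w‖)
    (m : EuclideanSpace ℝ (Fin n)) (hmL : m ∈ L) (hm0 : m ≠ 0)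
    (hmin : ∀ w ∈ L, w ≠ 0 → ‖m‖ ≤ ‖w‖)
    (x : Fin n → ℤ) (hx : m = ∑ i, (x i : ℝ) • e i) :
    (n ≤ 3 → ∀ i, |x i| ≤ 1) ∧
    ((n = 4 ∨ n = 5) → ∀ i, |x i| ≤ 2) ∧
    (n = 6 → ∀ i, |x i| ≤ 3) := by
  have heL : ∀ j, e j ∈ L := by
    intro j
    rw [hL]
    exact ⟨fun l => if l = j then 1 else 0, by simp⟩
  have hnorm : ∀ j, ‖e j‖ = ‖m‖ := fun j =>
    le_antisymm ((hminvecs j).2 m hmL hm0) (hmin _ (heL j) (hminvecs j).1)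
  have hsys := lattice_lower_bound e (μ := ‖m‖ ^ 2) (by positivity)
    (fun j => by rw [hnorm]) (fun c hc => by
      have hne : ∑ j, (c j : ℝ) • e j ≠ 0 := by
        intro h0
        apply hc
        funext j
        have := Fintype.linearIndependent_iff.mp he (fun j => (c j : ℝ)) h0 j
        exact_mod_cast this
      have := hmin _ (by rw [hL]; exact ⟨c, rfl⟩) hne
      gcongr) x (by rw [← hx])
  have hbound : ∀ i, 8 * ((x i).natAbs - 1) ≤ n * (x i).natAbs := by
    intro i
    rcases Nat.eq_zero_or_pos (x i).natAbs with h | h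
    · simp [h]
    · exact (hsys i).index_bound h
  refine ⟨fun h i => ?_, fun h i => ?_, fun h i => ?_⟩ <;> rw [Int.abs_eq_natAbs]
  · have := hbound i
    have h2 : n * (x i).natAbs ≤ 3 * (x i).natAbs := by gcongr
    omega
  · have := hbound i
    have h2 : n * (x i).natAbs ≤ 5 * (x i).natAbs := by gcongr; omega
    omega
  · subst h
    have h1 := hbound i
    have h2 : (x i).natAbs ≠ 4 := by
      intro h4
      have := hsys i
      rw [h4] at this
      exact not_index_four this
    omega
end

section
/- Every lattice L of dimension n in ℝⁿ possesses a Minkowski-reduced basis: there exists a basis (b₁, …, bₙ) of L such that for every i ∈ {1, …, n} and every x ∈ ℤⁿ with gcd(xᵢ, xᵢ₊₁, …, xₙ) = 1 one has ‖x₁b₁ + ⋯ + xₙbₙ‖ ≥ ‖bᵢ‖. -/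
/-!
Minkowski's greedy construction, carried out on coordinate vectors in `ℤⁿ`. Write `T c = ∑ cᵢ bᵢ`.

A vector `∑ cⱼ vⱼ` in a basis `v` of `ℤⁿ` has `gcd (cᵢ, …, cₙ) = 1` exactly when some integral
functional `g` kills `vⱼ` for all `j < i` and takes the value `1` on it. This description only
involves the vectors *before* `vᵢ`, so one can choose `v₁, v₂, …` in turn, each `vₖ` minimizing
`‖T w‖` over all `w` admitting a functional that vanishes on the vectors already chosen and
is `1` at `w`. Minimizers exist because a lattice has finitely many points in any ball
(`exists_min_norm`), and candidates exist as long as fewer than `n` vectors have been chosen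
(`exists_unimodular_functional`).

That the outcome is a basis is ensured by carrying along a dual system `f` with `fᵢ(vⱼ) = δᵢⱼ`. When
`vₖ` is chosen with witness `g`, the system is updated by `fₖ = g` and `fⱼ ← fⱼ - fⱼ(vₖ) g`
(`exists_greedy_system`). After `n` steps the matrices of `f` and `v` are inverse to each other,
so `v` is a basis of `ℤⁿ`. Functionals on `ℤⁿ` are represented by vectors through the dot product.
-/

/-- Fewer than `n` vectors of `ℤⁿ` are annihilated by a functional that takes the value `1`:
a nonzero annihilating functional exists by rank, and becomes unimodular once divided by the gcd of
its coefficients. -/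
lemma exists_unimodular_functional {n k : ℕ} (hk : k < n) (v : ℕ → Fin n → ℤ) :
    ∃ g w : Fin n → ℤ, (∀ j < k, g ⬝ᵥ v j = 0) ∧ g ⬝ᵥ w = 1 := by
  obtain ⟨g, hg0, hg⟩ : ∃ g : Fin n → ℤ, g ≠ 0 ∧ ∀ j < k, g ⬝ᵥ v j = 0 := by
    let A : Matrix (Fin k) (Fin n) ℤ := fun j => v j
    have hA : ¬ Function.Injective A.mulVecLin := by
      intro h
      have := LinearMap.finrank_le_finrank_of_injective h
      simp at this
      omega
    rw [← LinearMap.ker_eq_bot, Submodule.eq_bot_iff] at hA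
    push Not at hA
    obtain ⟨g, hg, hg0⟩ := hA
    refine ⟨g, hg0, fun j hj => ?_⟩
    have := congrFun (LinearMap.mem_ker.mp hg) ⟨j, hj⟩
    rw [dotProduct_comm]
    exact this
  have hne : (Finset.univ : Finset (Fin n)).Nonempty := ⟨⟨k, hk⟩, Finset.mem_univ _⟩
  obtain ⟨h, hgh, hh⟩ := Finset.extract_gcd g hne
  obtain ⟨w, hw⟩ := Finset.gcd_eq_sum_mul Finset.univ h
  have hd : (Finset.univ.gcd g) ≠ 0 := by
    intro h0
    apply hg0
    ext i
    simp [hgh i (Finset.mem_univ i), h0]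
  have hgs : g = (Finset.univ.gcd g) • h := by
    ext i
    simpa using hgh i (Finset.mem_univ i)
  refine ⟨h, w, fun j hj => ?_, ?_⟩
  · have := hg j hj
    rw [hgs, smul_dotProduct, smul_eq_mul] at this
    exact (mul_eq_zero.mp this).resolve_left hd
  · rw [← hh, hw]
    rfl

/-- Every nonempty set of lattice points contains a shortest one. -/
lemma exists_min_norm {n : ℕ} (b : Fin n → EuclideanSpace ℝ (Fin n))
    (hb : LinearIndependent ℝ b) (S : Set (Fin n → ℤ)) (hS : S.Nonempty) :
    ∃ w ∈ S, ∀ w' ∈ S, ‖Fintype.linearCombination ℤ b w‖ ≤ ‖Fintype.linearCombination ℤ b w'‖ := by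
  obtain ⟨w₀, hw₀⟩ := hS
  set T := Fintype.linearCombination ℤ b with hT
  have hinj : Function.Injective T :=
    linearIndependent_iff_injective_fintypeLinearCombination.mp (hb.restrict_scalars' ℤ)
  have hfin : (S ∩ {w | ‖T w‖ ≤ ‖T w₀‖}).Finite := by
    let B := basisOfLinearIndependentOfCardEqFinrank' b hb (by simp)
    have h := ZSpan.setFinite_inter B (Metric.isBounded_closedBall (x := 0) (r := ‖T w₀‖))
    refine (h.preimage hinj.injOn).subset ?_
    rintro w ⟨-, hw⟩
    refine ⟨by simpa using hw, ?_⟩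
    rw [hT, Fintype.linearCombination_apply]
    refine sum_mem fun i _ => Submodule.smul_mem _ _ (Submodule.subset_span ⟨i, ?_⟩)
    simp [B]
  obtain ⟨w, hw, hmin⟩ := hfin.exists_minimalFor (fun w => ‖T w‖) _ ⟨w₀, hw₀, le_refl ‖T w₀‖⟩
  refine ⟨w, hw.1, fun w' hw' => ?_⟩
  by_contra! hlt
  exact absurd (hmin ⟨hw', hlt.le.trans hw.2⟩ hlt.le) (not_le.mpr hlt)

/-- The first `k` steps of the greedy construction: `v₀, …, vₖ₋₁` with a dual system
`f₀, …, fₖ₋₁`, each `vᵢ` being shortest among the vectors on which some functional vanishing on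
`v₀, …, vᵢ₋₁` takes the value `1`. Both sequences carry arbitrary values beyond index `k`. -/
lemma exists_greedy_system {n : ℕ} (b : Fin n → EuclideanSpace ℝ (Fin n))
    (hb : LinearIndependent ℝ b) (k : ℕ) (hk : k ≤ n) :
    ∃ v f : ℕ → Fin n → ℤ,
      (∀ i < k, ∀ j < k, f i ⬝ᵥ v j = if i = j then 1 else 0) ∧
      ∀ i < k, ∀ g w : Fin n → ℤ, (∀ j < i, g ⬝ᵥ v j = 0) → g ⬝ᵥ w = 1 →
        ‖Fintype.linearCombination ℤ b (v i)‖ ≤ ‖Fintype.linearCombination ℤ b w‖ := by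
  induction k with
  | zero => exact ⟨0, 0, by simp, by simp⟩
  | succ k ih =>
    obtain ⟨v, f, hdual, hmin⟩ := ih (by omega)
    obtain ⟨g₀, w₀, hg₀, hw₀⟩ := exists_unimodular_functional (k := k) (by omega) v
    obtain ⟨u, ⟨g, hg, hgu⟩, hu⟩ := exists_min_norm b hb
      {w | ∃ g : Fin n → ℤ, (∀ j < k, g ⬝ᵥ v j = 0) ∧ g ⬝ᵥ w = 1} ⟨w₀, g₀, hg₀, hw₀⟩
    refine ⟨fun j => if j = k then u else v j,
      fun j => if j = k then g else f j - (f j ⬝ᵥ u) • g, ?_, ?_⟩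
    · intro i hi j hj
      by_cases hik : i = k <;> by_cases hjk : j = k
      · simp [hik, hjk, hgu]
      · simp [hik, hjk, hg j (by omega), Ne.symm hjk]
      · simp [-zsmul_eq_mul, hik, hjk, sub_dotProduct, smul_dotProduct, hgu]
      · simp [-zsmul_eq_mul, hik, hjk, sub_dotProduct, smul_dotProduct, hg j (by omega), hdual i (by omega) j (by omega)]
    · intro i hi g' w hg' hw
      have hg'' : ∀ j < i, g' ⬝ᵥ v j = 0 := by
        intro j hj
        have := hg' j hj
        simpa [show j ≠ k by omega] using this
      by_cases hik : i = k
      · subst hik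
        simpa using hu w ⟨g', hg'', hw⟩
      · simpa [hik] using hmin i (by omega) g' w hg'' hw

/-- every lattice of dimension n in ℝⁿ possesses a
Minkowski-reduced basis. -/
theorem exists_minkowski_reduced_basis
    (n : ℕ) (hn : 1 ≤ n)
    (b : Fin n → EuclideanSpace ℝ (Fin n)) (hb : LinearIndependent ℝ b)
    (L : Set (EuclideanSpace ℝ (Fin n)))
    (hL : L = {v | ∃ c : Fin n → ℤ, v = ∑ i, (c i : ℝ) • b i}) :
    ∃ b' : Fin n → EuclideanSpace ℝ (Fin n),
      LinearIndependent ℝ b' ∧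
      L = {v | ∃ c : Fin n → ℤ, v = ∑ i, (c i : ℝ) • b' i} ∧
      ∀ (i : Fin n) (c : Fin n → ℤ),
        Finset.gcd (Finset.univ.filter fun j => i ≤ j) c = 1 →
        ‖b' i‖ ≤ ‖∑ j, (c j : ℝ) • b' j‖ := by
  obtain ⟨v, f, hdual, hmin⟩ := exists_greedy_system b hb n le_rfl
  set T := Fintype.linearCombination ℤ b with hT
  have hTb : ∀ c : Fin n → ℤ, ∑ i, (c i : ℝ) • b i = T c := by
    intro c
    simp [hT, Fintype.linearCombination_apply, Int.cast_smul_eq_zsmul]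
  have hTv : ∀ c : Fin n → ℤ, ∑ i, (c i : ℝ) • T (v i) = T (∑ i, c i • v i) := by
    intro c
    simp only [Int.cast_smul_eq_zsmul, map_sum, map_smul]
  let V : Matrix (Fin n) (Fin n) ℤ := Matrix.of fun i => v i
  let F : Matrix (Fin n) (Fin n) ℤ := Matrix.of fun i => f i
  have hFV : V.transpose * F = 1 := by
    have h : F * V.transpose = 1 := by
      ext i j
      have := hdual i i.2 j j.2
      simp only [Fin.val_inj] at this
      rw [Matrix.one_apply, ← this]
      rfl
    exact mul_eq_one_comm.mp h
  -- The coordinates of `c` with respect to `v` are the values of the dual system on `c`.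
  have hexp : ∀ c : Fin n → ℤ, ∑ i, (F.mulVec c) i • v i = c := by
    intro c
    have h : V.transpose.mulVec (F.mulVec c) = c := by
      rw [Matrix.mulVec_mulVec, hFV, Matrix.one_mulVec]
    nth_rewrite 2 [← h]
    ext l
    simp [Matrix.mulVec, dotProduct, V, mul_comm]
  refine ⟨fun i => T (v i), ?_, ?_, ?_⟩
  · apply linearIndependent_of_top_le_span_of_card_eq_finrank
    · rw [← hb.span_eq_top_of_card_eq_finrank' (by simp), Submodule.span_le]
      rintro _ ⟨i, rfl⟩
      have hi : b i = T (Pi.single i 1) := by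
        simp [hT]
      rw [hi, ← hexp (Pi.single i 1), ← hTv]
      exact sum_mem fun j _ => Submodule.smul_mem _ _ (Submodule.subset_span ⟨j, rfl⟩)
    · simp
  · rw [hL]
    ext x
    simp only [Set.mem_ofPred_eq, hTb, hTv]
    constructor
    · rintro ⟨c, rfl⟩
      exact ⟨F.mulVec c, by rw [hexp]⟩
    · rintro ⟨c, rfl⟩
      exact ⟨_, rfl⟩
  · intro i c hc
    obtain ⟨a, ha⟩ := Finset.gcd_eq_sum_mul (Finset.univ.filter fun j => i ≤ j) c
    rw [hc] at ha
    rw [hTv]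
    -- The Bézout coefficients give the functional witnessing that `∑ cⱼ vⱼ` competed with `vᵢ`.
    refine hmin i i.2 (∑ j with i ≤ j, a j • f j) _ ?_ ?_
    · intro l hl
      rw [sum_dotProduct]
      refine Finset.sum_eq_zero fun j hj => ?_
      have hij : (i : ℕ) ≤ j := (Finset.mem_filter.mp hj).2
      rw [smul_dotProduct, hdual j j.2 l (by omega), if_neg (by omega), smul_zero]
    · rw [ha, sum_dotProduct]
      refine Finset.sum_congr rfl fun j _ => ?_
      simp [-zsmul_eq_mul, smul_dotProduct, dotProduct_sum, dotProduct_smul, hdual, Fin.val_inj, mul_comm]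
end

section
/- Let L be a lattice of dimension n in ℝⁿ and let (b₁, …, bₙ) be a Hermite-reduced basis of L. Then (b₁, …, bₙ) is Minkowski-reduced: for every i ∈ {1, …, n} and every x ∈ ℤⁿ with gcd(xᵢ, xᵢ₊₁, …, xₙ) = 1 one has ‖x₁b₁ + ⋯ + xₙbₙ‖ ≥ ‖bᵢ‖. -/
/-!
Suppose `v = ∑ c j • b j` is shorter than `b i` although `c i, …, c (n-1)` have gcd one. Replace `i`
by the least index `p` with `‖v‖ < ‖b p‖`; as `p ≤ i`, the entries of `c` from `p` on still have gcd
one. Hence `b 0, …, b (p-1), v` extends to a basis `d` of the lattice (`exists_extend_span`): a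
primitive integer vector is part of a basis of `ℤ^m` (`exists_basis_of_gcd_eq_one`, a consequence of
the Smith normal form of the submodule it spans). Let `d'` be `d` sorted by norm. Its `k`-th norm is
at most `‖b k‖` for `k < p`, and its `p`-th norm is at most `‖v‖ < ‖b p‖`, because by minimality of
`p` the `p + 1` vectors `b 0, …, b (p-1), v` all have norm at most `‖v‖` (`sort_apply_le`). So the
norms of `d'` are lexicographically smaller than those of `b`, contradicting Hermite reducedness.
-/

/-- Lexicographic order (non-strict) on norm sequences. -/
def LexLe {n : ℕ} (u v : Fin n → ℝ) : Prop :=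
  u = v ∨ ∃ i, (∀ j, j < i → u j = v j) ∧ u i < v i

/-- A primitive integer vector is a member, at any prescribed position, of a basis of `ℤ^ι`. -/
theorem exists_basis_of_gcd_eq_one {ι : Type*} [Fintype ι] [DecidableEq ι] (p : ι) (w : ι → ℤ)
    (hw : ∀ t : ℤ, (∀ j, t ∣ w j) → IsUnit t) :
    ∃ D : Module.Basis ι ℤ (ι → ℤ), D p = w := by
  have hw0 : w ≠ 0 := by
    rintro rfl
    have := hw 0 (by simp)
    simp at this
  obtain ⟨m, bM, bN, f, a, snf⟩ :=
    Submodule.smithNormalForm (Pi.basisFun ℤ ι) (Submodule.span ℤ {w})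
  obtain rfl : m = 1 := by
    have h1 := (LinearEquiv.toSpanNonzeroSingleton ℤ (ι → ℤ) w hw0).finrank_eq
    rw [Module.finrank_self, Module.finrank_eq_card_basis bN, Fintype.card_fin] at h1
    exact h1.symm
  obtain ⟨s, hs⟩ : ∃ s : ℤ, w = s • bM (f 0) := by
    have h := bN.sum_repr ⟨w, Submodule.mem_span_singleton_self w⟩
    rw [Fin.sum_univ_one] at h
    have h' := congrArg Subtype.val h
    rw [Submodule.coe_smul, snf, smul_smul] at h'
    exact ⟨_, h'.symm⟩
  obtain ⟨u, rfl⟩ := hw s fun j => ⟨bM (f 0) j, by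
    conv_lhs => rw [hs]
    simp⟩
  refine ⟨(bM.unitsSMul fun _ => u).reindex (Equiv.swap (f 0) p), ?_⟩
  rw [Module.Basis.reindex_apply, Equiv.symm_swap, Equiv.swap_apply_right,
    Module.Basis.unitsSMul_apply, hs]
  rfl

/-- If `c p, …, c (n-1)` have gcd one, then `b 0, …, b (p-1), ∑ c j • b j` is the beginning of a
family generating the same subgroup as `b`. -/
theorem exists_extend_span {E : Type*} [AddCommGroup E] {n : ℕ} (b : Fin n → E) (p : Fin n)
    (c : Fin n → ℤ) (hc : ∀ t : ℤ, (∀ j, p ≤ j → t ∣ c j) → IsUnit t) :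
    ∃ d : Fin n → E, (∀ j, j < p → d j = b j) ∧ d p = ∑ j, c j • b j ∧
      Submodule.span ℤ (Set.range d) = Submodule.span ℤ (Set.range b) := by
  classical
  obtain ⟨D, hD⟩ := exists_basis_of_gcd_eq_one (ι := {j : Fin n // p ≤ j}) ⟨p, le_rfl⟩
    (fun j => c j) (fun t ht => hc t fun j hj => ht ⟨j, hj⟩)
  let f : ({j : Fin n // p ≤ j} → ℤ) →ₗ[ℤ] E :=
    Fintype.linearCombination ℤ (fun j : {j : Fin n // p ≤ j} => b j)
  have hf : ∀ x, f x = ∑ j, x j • b j := fun x => Fintype.linearCombination_apply ..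
  let g : E := ∑ j : {j : Fin n // ¬ p ≤ j}, c j • b j
  let d : Fin n → E := fun j =>
    if h : p ≤ j then f (D ⟨j, h⟩) + (if j = p then g else 0) else b j
  have hd1 : ∀ j, j < p → d j = b j := fun j hj => dif_neg (not_le.2 hj)
  have hd2 : ∀ j (h : p ≤ j), d j = f (D ⟨j, h⟩) + (if j = p then g else 0) :=
    fun j h => dif_pos h
  have hgmem : ∀ S : Submodule ℤ E, (∀ j, j < p → b j ∈ S) → g ∈ S := fun S hS =>
    Submodule.sum_mem _ fun j _ => S.smul_mem _ (hS _ (not_le.1 j.2))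
  refine ⟨d, hd1, ?_, le_antisymm ?_ ?_⟩
  · rw [hd2 p le_rfl, if_pos rfl, hD, hf]
    exact Fintype.sum_subtype_add_sum_subtype (fun j => p ≤ j) (fun j => c j • b j)
  · rw [Submodule.span_le]
    rintro _ ⟨j, rfl⟩
    have hb : ∀ j, b j ∈ Submodule.span ℤ (Set.range b) := fun j => Submodule.subset_span ⟨j, rfl⟩
    rcases lt_or_ge j p with h | h
    · rw [hd1 j h]
      exact hb j
    · rw [hd2 j h, hf]
      refine Submodule.add_mem _ (Submodule.sum_mem _ fun k _ => Submodule.smul_mem _ _ (hb _)) ?_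
      split_ifs
      · exact hgmem _ fun k _ => hb k
      · exact Submodule.zero_mem _
  · have hdm : ∀ j, d j ∈ Submodule.span ℤ (Set.range d) := fun j => Submodule.subset_span ⟨j, rfl⟩
    have hb1 : ∀ j, j < p → b j ∈ Submodule.span ℤ (Set.range d) := fun j hj => hd1 j hj ▸ hdm j
    have hfD : ∀ j, f (D j) ∈ Submodule.span ℤ (Set.range d) := by
      rintro ⟨j, h⟩
      have h1 := hdm j
      rw [hd2 j h] at h1
      refine (Submodule.add_mem_iff_left _ ?_).1 h1
      split_ifs
      · exact hgmem _ hb1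
      · exact Submodule.zero_mem _
    have hfx : ∀ x, f x ∈ Submodule.span ℤ (Set.range d) := fun x => by
      rw [← D.sum_repr x, map_sum]
      refine Submodule.sum_mem _ fun j _ => ?_
      rw [map_smul]
      exact Submodule.smul_mem _ _ (hfD j)
    rw [Submodule.span_le]
    rintro _ ⟨j, rfl⟩
    rcases lt_or_ge j p with h | h
    · exact hb1 j h
    · have h1 := hfx (Pi.single ⟨j, h⟩ 1)
      have h2 : f (Pi.single ⟨j, h⟩ 1) = b j := by
        simp [f, Fintype.linearCombination_apply_single]
      rwa [h2] at h1

/-- If the first `k + 1` entries of `f` are at most `t`, then so is the `k`-th entry of `f` sorted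
increasingly. -/
theorem sort_apply_le {n : ℕ} (f : Fin n → ℝ) (k : Fin n) (t : ℝ) (h : ∀ j, j ≤ k → f j ≤ t) :
    f (Tuple.sort f k) ≤ t := by
  have hmono := Tuple.monotone_sort f
  refine (Tuple.lt_card_le_iff_apply_le_of_monotone (j := k) (a := t) hmono).1 ?_
  have hle : (Finset.Iic k).card ≤
      (Finset.univ.filter fun i => (f ∘ Tuple.sort f) i ≤ t).card := by
    refine Finset.card_le_card_of_injOn (fun j => (Tuple.sort f).symm j) ?_
      (Equiv.injective _).injOn
    intro j hj
    simpa using h j (by simpa using hj)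
  rw [Fin.card_Iic] at hle
  omega

theorem setOf_int_comb_eq_span {E : Type*} [AddCommGroup E] [Module ℝ E] {n : ℕ} (b : Fin n → E) :
    {v | ∃ c : Fin n → ℤ, v = ∑ i, (c i : ℝ) • b i} =
      (Submodule.span ℤ (Set.range b) : Set E) := by
  ext v
  simp only [Set.mem_ofPred_eq, SetLike.mem_coe, Submodule.mem_span_range_iff_exists_fun,
    Int.cast_smul_eq_zsmul]
  exact exists_congr fun c => eq_comm

/-- a Hermite-reduced basis is Minkowski-reduced. -/
theorem hermite_reduced_is_minkowski_reduced
    (n : ℕ) (hn : 1 ≤ n)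
    (b : Fin n → EuclideanSpace ℝ (Fin n)) (hb : LinearIndependent ℝ b)
    (L : Set (EuclideanSpace ℝ (Fin n)))
    (hL : L = {v | ∃ c : Fin n → ℤ, v = ∑ i, (c i : ℝ) • b i})
    (hbsorted : ∀ i j : Fin n, i ≤ j → ‖b i‖ ≤ ‖b j‖)
    (hhermite : ∀ c : Fin n → EuclideanSpace ℝ (Fin n),
      LinearIndependent ℝ c →
      L = {v | ∃ y : Fin n → ℤ, v = ∑ i, (y i : ℝ) • c i} →
      (∀ i j : Fin n, i ≤ j → ‖c i‖ ≤ ‖c j‖) →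
      LexLe (fun i => ‖b i‖) (fun i => ‖c i‖)) :
    ∀ (i : Fin n) (c : Fin n → ℤ),
      Finset.gcd (Finset.univ.filter fun j => i ≤ j) c = 1 →
      ‖b i‖ ≤ ‖∑ j, (c j : ℝ) • b j‖ := by
  intro i c hc
  by_contra! hlt
  obtain ⟨p, hp, hpmin⟩ : ∃ p, ‖∑ j, (c j : ℝ) • b j‖ < ‖b p‖ ∧
      ∀ j, j < p → ‖b j‖ ≤ ‖∑ j, (c j : ℝ) • b j‖ := by
    obtain ⟨p, hp, hmin⟩ := WellFounded.has_min (wellFounded_lt (α := Fin n))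
      {p | ‖∑ j, (c j : ℝ) • b j‖ < ‖b p‖} ⟨i, hlt⟩
    exact ⟨p, hp, fun j hj => not_lt.1 fun h => hmin j h hj⟩
  have hpi : p ≤ i := not_lt.1 fun h => (hpmin i h).not_gt hlt
  obtain ⟨d, hd1, hd2, hspan⟩ := exists_extend_span b p c fun t ht => by
    refine isUnit_of_dvd_one ?_
    rw [← hc]
    exact Finset.dvd_gcd fun j hj => ht j (hpi.trans (Finset.mem_filter.1 hj).2)
  simp only [← Int.cast_smul_eq_zsmul ℝ] at hd2
  -- `n` vectors spanning `ℝ^n` over `ℝ` are independent, so equality of the `ℤ`-spans suffices.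
  have hdli : LinearIndependent ℝ d := by
    refine linearIndependent_of_top_le_span_of_card_eq_finrank ?_ (by simp)
    have htop := hb.span_eq_top_of_card_eq_finrank' (by simp)
    rw [← htop, Submodule.span_le]
    have h1 : Set.range b ⊆ (Submodule.span ℤ (Set.range d) : Set _) := by
      rw [hspan]
      exact Submodule.subset_span
    exact h1.trans (Submodule.span_subset_span ℤ ℝ _)
  have hmono := Tuple.monotone_sort fun j => ‖d j‖
  set σ := Tuple.sort fun j => ‖d j‖ with hσ
  have hlex := hhermite (d ∘ σ) (hdli.comp σ σ.injective)
    (by rw [hL, setOf_int_comb_eq_span, setOf_int_comb_eq_span, σ.surjective.range_comp, hspan])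
    (fun i j hij => hmono hij)
  have hk : ∀ k, k < p → ‖d (σ k)‖ ≤ ‖b k‖ := fun k hkp =>
    sort_apply_le (fun j => ‖d j‖) k _ fun j hj => by
      rw [hd1 j (hj.trans_lt hkp)]
      exact hbsorted j k hj
  have hp' : ‖d (σ p)‖ < ‖b p‖ := by
    refine lt_of_le_of_lt (sort_apply_le (fun j => ‖d j‖) p _ fun j hj => ?_) hp
    rcases hj.eq_or_lt with rfl | h
    · rw [hd2]
    · rw [hd1 j h]
      exact hpmin j h
  rcases hlex with heq | ⟨m, hm, hmlt⟩
  · exact hp'.ne' (congrFun heq p)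
  · rcases lt_trichotomy m p with h | rfl | h
    · exact (hk m h).not_gt hmlt
    · exact hp'.not_gt hmlt
    · exact hp'.ne' (hm p h)
end
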